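/- arXiv:2209.14524 — 3 statements merged into one kernel-verified Lean document; each statement's English description precedes it below -/
import Mathlib

section
/- There exists a function f : ℕ × ℕ → ℕ such that for all positive integers s and t, if M is a matroid with the (s,2s,t,2t)-property and |E(M)| ≥ f(s,t), then M is an (s,t)-spike. -/
open Set Function

namespace Matroid

variable {α : Type*}

/-- A circuit of a matroid: a minimal dependent set. -/
def IsCircuit' (M : Matroid α) (C : Set α) : Prop := Minimal M.Dep C

/-- A cocircuit of a matroid: a circuit of the dual matroid. -/
def IsCocircuit' (M : Matroid α) (C : Set α) : Prop := M✶.IsCircuit' C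

/-- The `ℕ`-valued rank of a set `X` in a matroid `M`:
the size of a largest independent subset of `X`. -/
noncomputable def rk' (M : Matroid α) (X : Set α) : ℕ :=
  sSup {n : ℕ | ∃ I, M.Indep I ∧ I ⊆ X ∧ I.ncard = n}

/-- The connectivity function `λ(X) = r(X) + r(E − X) − r(M)`. -/
noncomputable def lam' (M : Matroid α) (X : Set α) : ℕ :=
  M.rk' X + M.rk' (M.E \ X) - M.rk' M.E

/-- The `(s,u,t,v)`-property: every `s`-element subset of the ground set is contained in a
circuit of size `u`, and every `t`-element subset is contained in a cocircuit of size `v`. -/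
def HasProp (M : Matroid α) (s u t v : ℕ) : Prop :=
  (∀ S ⊆ M.E, S.ncard = s → ∃ C, M.IsCircuit' C ∧ C.ncard = u ∧ S ⊆ C) ∧
  (∀ T ⊆ M.E, T.ncard = t → ∃ C, M.IsCocircuit' C ∧ C.ncard = v ∧ T ⊆ C)

/-- A `t`-echidna of order `n`: a family of `n` pairwise disjoint `2`-element subsets of the
ground set (spines) such that the union of any `t` spines is a circuit.
(A `t`-coechidna of `M` is a `t`-echidna of `M✶`.) -/
def IsEchidna (M : Matroid α) (t : ℕ) {n : ℕ} (S : Fin n → Set α) : Prop :=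
  (∀ i, S i ⊆ M.E) ∧ (∀ i, (S i).ncard = 2) ∧
  Pairwise (Function.onFun Disjoint S) ∧
  ∀ I : Finset (Fin n), I.card = t → M.IsCircuit' (⋃ i ∈ I, S i)

/-- `M` is an `(s,t)`-spike with associated partition `(A 1, …, A m)`: the `A i` are `m`
pairwise disjoint pairs partitioning the ground set, with `m ≥ max s t`, such that the union of
any `s` pairs is a circuit and the union of any `t` pairs is a cocircuit. -/
def IsSpike (M : Matroid α) (s t : ℕ) {m : ℕ} (A : Fin m → Set α) : Prop :=
  max s t ≤ m ∧ (⋃ i, A i) = M.E ∧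
  Pairwise (Function.onFun Disjoint A) ∧ (∀ i, (A i).ncard = 2) ∧
  (∀ I : Finset (Fin m), I.card = s → M.IsCircuit' (⋃ i ∈ I, A i)) ∧
  (∀ I : Finset (Fin m), I.card = t → M.IsCocircuit' (⋃ i ∈ I, A i))

end Matroid

universe u

open Matroid

/-!
Let `𝒞` be the family of `2s`-element circuits and `𝒟` the family of `2t`-element cocircuits.

When `E` is large, one can find `t - 1` disjoint circuits of bounded size avoiding a prescribed
bounded set. A member of `𝒟` through `x` and a transversal of these circuits meets each of them
twice by orthogonality, so at most two of its `2t` elements are left over: through every `x` there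
are cocircuits in `𝒟` meeting a prescribed bounded set in at most two elements, and dually for `𝒞`.

Two such circuits through `x` meet in at most two elements, while a sparse cocircuit through `x`
meets each of them in at least two. This forces all members of `𝒞` and of `𝒟` through `x` to share
exactly one further element `z`. The pairs `{x, z}` are the arms: a member of `𝒞` containing one
element of each of `s` arms contains their union, which has `2s` elements.
-/

section Families

variable {α : Type*} {𝒞 𝒟 : Set (Finset α)} {N : ℕ} {x y : α}

/-- The intersection of all members of the family `𝒞` that contain `x`. In a large matroid with the
`(s,2s,t,2t)`-property, the hulls with respect to the `2s`-element circuits are the arms of the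
spike. -/
def familyHull (𝒞 : Set (Finset α)) (x : α) : Set α := {y | ∀ C ∈ 𝒞, x ∈ C → y ∈ C}

theorem mem_familyHull_self (𝒞 : Set (Finset α)) (x : α) : x ∈ familyHull 𝒞 x :=
  fun _ _ hx => hx

theorem familyHull_subset_of_mem (hy : y ∈ familyHull 𝒞 x) : familyHull 𝒞 y ⊆ familyHull 𝒞 x :=
  fun _ hz C hC hx => hz C hC (hy C hC hx)

theorem familyHull_eq_of_mem (hy : y ∈ familyHull 𝒞 x) (hfin : (familyHull 𝒞 x).Finite)
    (hle : (familyHull 𝒞 x).ncard ≤ (familyHull 𝒞 y).ncard) : familyHull 𝒞 y = familyHull 𝒞 x :=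
  Set.eq_of_subset_of_ncard_le (familyHull_subset_of_mem hy) hle hfin

theorem pairwiseDisjoint_image_familyHull {E : Set α} {k : ℕ} (hk : k ≠ 0)
    (hE : ∀ x ∈ E, familyHull 𝒞 x ⊆ E) (hncard : ∀ x ∈ E, (familyHull 𝒞 x).ncard = k) :
    (familyHull 𝒞 '' E).PairwiseDisjoint id := by
  have heq : ∀ x ∈ E, ∀ z ∈ familyHull 𝒞 x, familyHull 𝒞 z = familyHull 𝒞 x := fun x hx z hz =>
    familyHull_eq_of_mem hz (Set.finite_of_ncard_ne_zero (by rwa [hncard x hx]))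
      (by rw [hncard x hx, hncard z (hE x hx hz)])
  rintro _ ⟨x, hx, rfl⟩ _ ⟨y, hy, rfl⟩ hne
  refine Set.disjoint_left.2 fun z hzx hzy => hne ?_
  rw [← heq x hx z hzx, heq y hy z hzy]

variable [DecidableEq α]

theorem inter_eq_inter_of_card_inter_union_le {A B D : Finset α} {n : ℕ}
    (hA : n ≤ (D ∩ A).card) (hB : n ≤ (D ∩ B).card) (hAB : (D ∩ (A ∪ B)).card ≤ n) :
    D ∩ A = D ∩ B :=
  (Finset.eq_of_subset_of_card_le (Finset.inter_subset_inter_left Finset.subset_union_left)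
    (hAB.trans hA)).trans
  (Finset.eq_of_subset_of_card_le (Finset.inter_subset_inter_left Finset.subset_union_right)
    (hAB.trans hB)).symm

theorem inter_subset_of_card_inter_union_le {A B D : Finset α} {n : ℕ} (h : (A ∩ B).card ≤ n)
    (hA : n ≤ (D ∩ A).card) (hB : n ≤ (D ∩ B).card) (hAB : (D ∩ (A ∪ B)).card ≤ n) :
    A ∩ B ⊆ D := by
  have hDA : D ∩ A = A ∩ B := by
    refine Finset.eq_of_subset_of_card_le (Finset.subset_inter Finset.inter_subset_right ?_)
      (h.trans hA)
    rw [inter_eq_inter_of_card_inter_union_le hA hB hAB]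
    exact Finset.inter_subset_right
  exact hDA ▸ Finset.inter_subset_left

/-- Through `x` there are members of `𝒞` that almost avoid any prescribed set `Y` of at most `N`
elements: they meet `Y` in at most two elements, one of which may be `x` itself. -/
def HasSparseMembersAt (𝒞 : Set (Finset α)) (N : ℕ) (x : α) : Prop :=
  ∀ Y : Finset α, Y.card ≤ N → ∃ C ∈ 𝒞, x ∈ C ∧ (C ∩ Y).card ≤ 2

/-- The combinatorial properties of the `2s`-element circuits `𝒞` and the `2t`-element cocircuits
`𝒟` that force the members through `x` to share exactly one further element. The bound `N` is
large enough for a member to almost avoid the union of any three members. -/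
structure IsSparseOrthogonalPairAt (𝒞 𝒟 : Set (Finset α)) (N : ℕ) (x : α) : Prop where
  two_le_card_inter : ∀ C ∈ 𝒞, ∀ D ∈ 𝒟, x ∈ C → x ∈ D → 2 ≤ (C ∩ D).card
  card_left_le : ∀ C ∈ 𝒞, 3 * C.card ≤ N
  card_right_le : ∀ D ∈ 𝒟, 3 * D.card ≤ N
  sparse_left : HasSparseMembersAt 𝒞 N x
  sparse_right : HasSparseMembersAt 𝒟 N x

namespace IsSparseOrthogonalPairAt

variable {A B C D : Finset α}

theorem symm (h : IsSparseOrthogonalPairAt 𝒞 𝒟 N x) : IsSparseOrthogonalPairAt 𝒟 𝒞 N x where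
  two_le_card_inter D hD C hC hxD hxC :=
    Finset.inter_comm C D ▸ h.two_le_card_inter C hC D hD hxC hxD
  card_left_le := h.card_right_le
  card_right_le := h.card_left_le
  sparse_left := h.sparse_right
  sparse_right := h.sparse_left

theorem exists_card_inter_le_two (h : IsSparseOrthogonalPairAt 𝒞 𝒟 N x) :
    ∃ A ∈ 𝒞, ∃ B ∈ 𝒞, x ∈ A ∧ x ∈ B ∧ (A ∩ B).card ≤ 2 := by
  obtain ⟨B, hB, hxB, -⟩ := h.sparse_left ∅ (Nat.zero_le _)
  obtain ⟨A, hA, hxA, hAB⟩ := h.sparse_left B (by have := h.card_left_le B hB; omega)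
  exact ⟨A, hA, B, hB, hxA, hxB, hAB⟩

theorem exists_card_inter_union_union_le_two (h : IsSparseOrthogonalPairAt 𝒞 𝒟 N x)
    (hA : A ∈ 𝒞) (hB : B ∈ 𝒞) (hC : C ∈ 𝒞) :
    ∃ D ∈ 𝒟, x ∈ D ∧ (D ∩ (A ∪ B ∪ C)).card ≤ 2 := by
  refine h.sparse_right _ ?_
  have hAc := h.card_left_le A hA
  have hBc := h.card_left_le B hB
  have hCc := h.card_left_le C hC
  have hABC := Finset.card_union_le (A ∪ B) C
  have hAB := Finset.card_union_le A B
  omega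

theorem exists_card_inter_union_le_two (h : IsSparseOrthogonalPairAt 𝒞 𝒟 N x)
    (hA : A ∈ 𝒞) (hB : B ∈ 𝒞) : ∃ D ∈ 𝒟, x ∈ D ∧ (D ∩ (A ∪ B)).card ≤ 2 := by
  simpa only [Finset.union_assoc, Finset.union_self] using
    h.exists_card_inter_union_union_le_two hA hB hB

theorem inter_eq_inter (h : IsSparseOrthogonalPairAt 𝒞 𝒟 N x) (hA : A ∈ 𝒞) (hB : B ∈ 𝒞)
    (hxA : x ∈ A) (hxB : x ∈ B) (hD : D ∈ 𝒟) (hxD : x ∈ D) (hAB : (D ∩ (A ∪ B)).card ≤ 2) :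
    D ∩ A = D ∩ B :=
  inter_eq_inter_of_card_inter_union_le (h.symm.two_le_card_inter D hD A hA hxD hxA)
    (h.symm.two_le_card_inter D hD B hB hxD hxB) hAB

theorem inter_subset (h : IsSparseOrthogonalPairAt 𝒞 𝒟 N x) (hA : A ∈ 𝒞) (hB : B ∈ 𝒞)
    (hxA : x ∈ A) (hxB : x ∈ B) (hAB2 : (A ∩ B).card ≤ 2) (hD : D ∈ 𝒟) (hxD : x ∈ D)
    (hAB : (D ∩ (A ∪ B)).card ≤ 2) : A ∩ B ⊆ D :=
  inter_subset_of_card_inter_union_le hAB2 (h.symm.two_le_card_inter D hD A hA hxD hxA)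
    (h.symm.two_le_card_inter D hD B hB hxD hxB) hAB

theorem familyHull_eq_inter (h : IsSparseOrthogonalPairAt 𝒞 𝒟 N x) (hA : A ∈ 𝒞) (hB : B ∈ 𝒞)
    (hxA : x ∈ A) (hxB : x ∈ B) (hAB : (A ∩ B).card ≤ 2) :
    familyHull 𝒞 x = ↑(A ∩ B) := by
  refine Set.Subset.antisymm
    (fun y hy => Finset.mem_inter.2 ⟨hy A hA hxA, hy B hB hxB⟩) fun y hy C hC hxC => ?_
  obtain ⟨D, hD, hxD, hDc⟩ := h.exists_card_inter_union_union_le_two hA hB hC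
  have hABD : A ∩ B ⊆ D := h.inter_subset hA hB hxA hxB hAB hD hxD
    ((Finset.card_le_card (Finset.inter_subset_inter_left Finset.subset_union_left)).trans hDc)
  have hDAC : D ∩ A = D ∩ C := h.inter_eq_inter hA hC hxA hxC hD hxD
    ((Finset.card_le_card (Finset.inter_subset_inter_left
      (Finset.union_subset_union_left Finset.subset_union_left))).trans hDc)
  have hyDA : y ∈ D ∩ A := Finset.mem_inter.2 ⟨hABD hy, (Finset.mem_inter.1 hy).1⟩
  exact (Finset.mem_inter.1 (hDAC ▸ hyDA)).2

theorem ncard_familyHull (h : IsSparseOrthogonalPairAt 𝒞 𝒟 N x) :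
    (familyHull 𝒞 x).ncard = 2 := by
  obtain ⟨A, hA, B, hB, hxA, hxB, hAB⟩ := h.exists_card_inter_le_two
  obtain ⟨D, hD, hxD, hDc⟩ := h.exists_card_inter_union_le_two hA hB
  have hDAB : D ∩ A ⊆ A ∩ B := Finset.subset_inter Finset.inter_subset_right
    (h.inter_eq_inter hA hB hxA hxB hD hxD hDc ▸ Finset.inter_subset_right)
  rw [h.familyHull_eq_inter hA hB hxA hxB hAB, Set.ncard_coe_finset]
  exact hAB.antisymm ((h.symm.two_le_card_inter D hD A hA hxD hxA).trans (Finset.card_le_card hDAB))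

theorem familyHull_subset (h : IsSparseOrthogonalPairAt 𝒞 𝒟 N x) :
    familyHull 𝒞 x ⊆ familyHull 𝒟 x := by
  intro y hy D hD hxD
  obtain ⟨A, hA, B, hB, hxA, hxB, hAB⟩ := h.exists_card_inter_le_two
  obtain ⟨D₀, hD₀, hxD₀, hD₀c⟩ := h.exists_card_inter_union_le_two hA hB
  have hyD₀ : y ∈ D₀ := h.inter_subset hA hB hxA hxB hAB hD₀ hxD₀ hD₀c
    (Finset.mem_inter.2 ⟨hy A hA hxA, hy B hB hxB⟩)
  obtain ⟨C, hC, hxC, hCc⟩ := h.symm.exists_card_inter_union_le_two hD₀ hD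
  have hCD : C ∩ D₀ = C ∩ D := h.symm.inter_eq_inter hD₀ hD hxD₀ hxD hC hxC hCc
  have hyC : y ∈ C ∩ D₀ := Finset.mem_inter.2 ⟨hy C hC hxC, hyD₀⟩
  exact (Finset.mem_inter.1 (hCD ▸ hyC)).2

theorem familyHull_eq (h : IsSparseOrthogonalPairAt 𝒞 𝒟 N x) :
    familyHull 𝒞 x = familyHull 𝒟 x :=
  h.familyHull_subset.antisymm h.symm.familyHull_subset

end IsSparseOrthogonalPairAt

end Families

section Matroids

variable {α : Type*} {M : Matroid α} {c s t u v n k N : ℕ} {x : α}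

/-- Every element of `M` lies on a circuit with at most `c` elements. -/
def IsCoveredByCircuits (M : Matroid α) (c : ℕ) : Prop :=
  ∀ e ∈ M.E, ∃ C : Finset α, M.IsCircuit (C : Set α) ∧ C.card ≤ c ∧ e ∈ C

/-- The circuits of `M` with exactly `n` elements, as finsets. -/
def circuitsOfCard (M : Matroid α) (n : ℕ) : Set (Finset α) :=
  {C | M.IsCircuit (C : Set α) ∧ C.card = n}

theorem two_le_card_inter_of_isCocircuit [DecidableEq α] {C D : Finset α}
    (hC : M.IsCircuit (C : Set α)) (hD : M.IsCocircuit (D : Set α)) (hxC : x ∈ C) (hxD : x ∈ D) :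
    2 ≤ (C ∩ D).card := by
  have hpos : 0 < (C ∩ D).card := Finset.card_pos.2 ⟨x, Finset.mem_inter.2 ⟨hxC, hxD⟩⟩
  have hne : (C ∩ D).card ≠ 1 := by
    intro h
    obtain ⟨e, he⟩ := Finset.card_eq_one.1 h
    exact hC.inter_isCocircuit_ne_singleton hD (e := e) (by exact_mod_cast he)
  omega

theorem exists_mem_ground_notMem_of_card_lt {W : Finset α} (h : (W.card : ℕ∞) < M.E.encard) :
    ∃ e ∈ M.E, e ∉ W := by
  by_contra! hE
  have hle : M.E.encard ≤ (W : Set α).encard := Set.encard_le_encard hE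
  rw [Set.encard_coe_eq_coe_finsetCard] at hle
  exact hle.not_gt h

namespace IsCoveredByCircuits

variable [DecidableEq α]

theorem exists_subset_closure_sdiff (hM : IsCoveredByCircuits M c) (k : ℕ)
    (hk : ((c * k : ℕ) : ℕ∞) < M.E.encard) :
    ∃ W J : Finset α, J ⊆ W ∧ J.card = k ∧ W.card ≤ c * k ∧
      (W : Set α) ⊆ M.closure ↑(W \ J) := by
  -- Each of the `k` circuits making up `W` contributes to `J` an element outside the earlier
  -- circuits; that element is spanned by the rest of its circuit.
  induction k with
  | zero => exact ⟨∅, ∅, by simp⟩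
  | succ k ih =>
    have hlt : ((c * k : ℕ) : ℕ∞) < M.E.encard :=
      lt_of_le_of_lt (mod_cast Nat.mul_le_mul_left c k.le_succ) hk
    obtain ⟨W, J, hJW, hJ, hW, hcl⟩ := ih hlt
    obtain ⟨e, heE, heW⟩ := exists_mem_ground_notMem_of_card_lt
      (lt_of_le_of_lt (mod_cast hW) hlt)
    obtain ⟨C, hC, hCc, heC⟩ := hM e heE
    have hWcl : (W : Set α) ⊆ M.closure ↑((W ∪ C) \ insert e J) := by
      refine hcl.trans (M.closure_subset_closure ?_)
      norm_cast
      grind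
    have hCcl : (C : Set α) \ {e} ⊆ M.closure ↑((W ∪ C) \ insert e J) := by
      intro y hy
      by_cases hyW : y ∈ W
      · exact hWcl hyW
      · exact M.mem_closure_of_mem' (by grind) (hC.subset_ground hy.1)
    have hecl : e ∈ M.closure ↑((W ∪ C) \ insert e J) :=
      M.closure_subset_closure_of_subset_closure hCcl (hC.mem_closure_sdiff_singleton_of_mem heC)
    refine ⟨W ∪ C, insert e J, by grind, ?_, ?_, ?_⟩
    · rw [Finset.card_insert_of_notMem fun he => heW (hJW he), hJ]
    · grind [Finset.card_union_le W C]
    · rw [Finset.coe_union]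
      refine Set.union_subset hWcl fun y hy => ?_
      by_cases hye : y = e
      · exact hye ▸ hecl
      · exact hCcl ⟨hy, hye⟩

omit [DecidableEq α] in
theorem exists_isCircuit_disjoint (hM : IsCoveredByCircuits M c) {X : Finset α} (hX : X.card < n)
    (hn : ((c * n : ℕ) : ℕ∞) < M.E.encard) :
    ∃ C : Finset α, M.IsCircuit (C : Set α) ∧ Disjoint C X ∧ C.card ≤ c * n := by
  classical
  obtain ⟨W, J, hJW, hJ, hW, hcl⟩ := hM.exists_subset_closure_sdiff n hn
  have hdep : M.Dep ↑(W \ X) := by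
    have hWE : (↑(W \ X) : Set α) ⊆ M.E := by
      grw [Finset.sdiff_subset, hcl]
      exact M.closure_subset_ground _
    rw [← M.not_indep_iff hWE]
    intro hI
    have hcard : (↑(W \ X) : Set α).encard ≤ (↑(W \ J) : Set α).encard :=
      calc (↑(W \ X) : Set α).encard
          ≤ M.eRk (M.closure ↑(W \ J)) := hI.encard_le_eRk_of_subset <| by
            grw [Finset.sdiff_subset, hcl]
        _ = M.eRk ↑(W \ J) := M.eRk_closure_eq _
        _ ≤ (↑(W \ J) : Set α).encard := M.eRk_le_encard _
    rw [Set.encard_coe_eq_coe_finsetCard, Set.encard_coe_eq_coe_finsetCard, Nat.cast_le,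
      Finset.card_sdiff_of_subset hJW] at hcard
    have hWX := Finset.le_card_sdiff X W
    have hJc := Finset.card_le_card hJW
    omega
  obtain ⟨C, hCWX, hC⟩ := hdep.exists_isCircuit_subset
  lift C to Finset α using (W \ X).finite_toSet.subset hCWX
  rw [Finset.coe_subset] at hCWX
  exact ⟨C, hC, Finset.disjoint_of_subset_left hCWX Finset.sdiff_disjoint,
    (Finset.card_le_card (hCWX.trans Finset.sdiff_subset)).trans hW⟩

theorem exists_two_mul_le_card_sdiff (hM : IsCoveredByCircuits M c) (k : ℕ) {X : Finset α}
    (hX : X.card < n) (hn : (((c + 1) ^ k * n : ℕ) : ℕ∞) ≤ M.E.encard) :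
    ∃ T : Finset α, (T : Set α) ⊆ M.E ∧ T.card = k ∧ Disjoint T X ∧
      ∀ D : Finset α, M.IsCocircuit (D : Set α) → T ⊆ D → 2 * k ≤ (D \ X).card := by
  -- `T` is a transversal of `k` disjoint circuits avoiding `X`; by orthogonality `D` meets each of
  -- them in at least two elements.
  induction k generalizing n X with
  | zero => exact ⟨∅, by simp⟩
  | succ k ih =>
    have hcn : ((c * n : ℕ) : ℕ∞) < M.E.encard := by
      refine lt_of_lt_of_le ?_ hn
      have hpow : 1 ≤ (c + 1) ^ k := Nat.one_le_pow _ _ c.succ_pos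
      norm_cast
      calc c * n < (c + 1) * n := by nlinarith
        _ ≤ (c + 1) ^ k * ((c + 1) * n) := Nat.le_mul_of_pos_left _ hpow
        _ = (c + 1) ^ (k + 1) * n := by ring
    obtain ⟨C, hC, hCX, hCc⟩ := hM.exists_isCircuit_disjoint hX hcn
    have hXC : (X ∪ C).card < (c + 1) * n := by
      have hle := Finset.card_union_le X C
      linarith
    obtain ⟨T, hTE, hTc, hTX, hT⟩ := ih hXC (by rwa [← mul_assoc, ← pow_succ])
    rw [Finset.disjoint_union_right] at hTX
    obtain ⟨e, heC⟩ := hC.nonempty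
    have heT : e ∉ T := fun he => Finset.disjoint_left.1 hTX.2 he heC
    refine ⟨insert e T, ?_, ?_, ?_, fun D hD hTD => ?_⟩
    · rw [Finset.coe_insert]
      exact Set.insert_subset (hC.subset_ground heC) hTE
    · rw [Finset.card_insert_of_notMem heT, hTc]
    · exact Finset.disjoint_insert_left.2 ⟨Finset.disjoint_left.1 hCX heC, hTX.1⟩
    · have hCD : 2 ≤ (C ∩ D).card :=
        two_le_card_inter_of_isCocircuit hC hD heC (hTD (Finset.mem_insert_self e T))
      have hsub : (C ∩ D) ∪ (D \ (X ∪ C)) ⊆ D \ X := by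
        grind [Finset.disjoint_left]
      have hdisj : Disjoint (C ∩ D) (D \ (X ∪ C)) := by grind [Finset.disjoint_left]
      have hle := Finset.card_le_card hsub
      rw [Finset.card_union_of_disjoint hdisj] at hle
      have hrest := hT D hD ((Finset.subset_insert e T).trans hTD)
      omega

theorem hasSparseMembersAt (hM : IsCoveredByCircuits M c) (ht : 0 < t)
    (hco : ∀ T : Finset α, (T : Set α) ⊆ M.E → T.card = t →
      ∃ D ∈ circuitsOfCard M✶ (2 * t), T ⊆ D)
    (hx : x ∈ M.E) (hN : (((c + 1) ^ (t - 1) * (N + 2) : ℕ) : ℕ∞) ≤ M.E.encard) :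
    HasSparseMembersAt (circuitsOfCard M✶ (2 * t)) N x := by
  intro Y hY
  have hxY : (insert x Y).card < N + 2 := by
    have hle := Finset.card_insert_le x Y
    omega
  obtain ⟨T, hTE, hTc, hTY, hT⟩ := hM.exists_two_mul_le_card_sdiff (t - 1) hxY hN
  rw [Finset.disjoint_insert_right] at hTY
  obtain ⟨D, hD, hTD⟩ := hco (insert x T)
    (by rw [Finset.coe_insert]; exact Set.insert_subset hx hTE)
    (by rw [Finset.card_insert_of_notMem hTY.1]; omega)
  refine ⟨D, hD, hTD (Finset.mem_insert_self x T), ?_⟩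
  have hout : 2 * (t - 1) ≤ (D \ insert x Y).card :=
    hT D hD.1 ((Finset.subset_insert x T).trans hTD)
  have hsplit := Finset.card_sdiff_add_card_inter D (insert x Y)
  have hmono : (D ∩ Y).card ≤ (D ∩ insert x Y).card :=
    Finset.card_le_card (Finset.inter_subset_inter_left (Finset.subset_insert x Y))
  have hDc := hD.2
  omega

end IsCoveredByCircuits

theorem hasProp_dual (h : M.HasProp s u t v) : M✶.HasProp t v s u :=
  ⟨h.2, by rw [dual_ground]; simpa only [IsCocircuit', dual_dual] using h.1⟩

theorem exists_mem_circuitsOfCard_superset (h : M.HasProp s u t v) (hu : 0 < u) {S : Finset α}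
    (hS : (S : Set α) ⊆ M.E) (hSc : S.card = s) : ∃ C ∈ circuitsOfCard M u, S ⊆ C := by
  obtain ⟨C, hC, hCu, hSC⟩ := h.1 S hS (by rw [Set.ncard_coe_finset, hSc])
  lift C to Finset α using Set.finite_of_ncard_pos (by omega)
  rw [Set.ncard_coe_finset] at hCu
  exact ⟨C, ⟨hC, hCu⟩, Finset.coe_subset.1 hSC⟩

theorem isCoveredByCircuits_of_hasProp (h : M.HasProp s u t v) (hs : 0 < s) (hu : 0 < u)
    (hE : (s : ℕ∞) ≤ M.E.encard) : IsCoveredByCircuits M u := by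
  intro e he
  have hes : ({e} : Set α).encard ≤ (s : ℕ∞) := by
    rw [Set.encard_singleton]
    exact_mod_cast hs
  obtain ⟨S, heS, hSE, hSc⟩ := Set.exists_superset_subset_encard_eq
    (Set.singleton_subset_iff.2 he) hes hE
  lift S to Finset α using Set.finite_of_encard_eq_coe hSc
  rw [Set.encard_coe_eq_coe_finsetCard, Nat.cast_inj] at hSc
  obtain ⟨C, hC, hSC⟩ := exists_mem_circuitsOfCard_superset h hu hSE hSc
  exact ⟨C, hC.1, hC.2.le, hSC (heS rfl)⟩

/-- A size of the ground set beyond which the `(s,2s,t,2t)`-property forces an `(s,t)`-spike. -/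
def spikeThreshold (s t : ℕ) : ℕ := (2 * (s + t) + 1) ^ (s + t) * (6 * (s + t) + 2)

theorem spikeThreshold_comm (s t : ℕ) : spikeThreshold s t = spikeThreshold t s := by
  rw [spikeThreshold, spikeThreshold, add_comm s t]

theorem pow_mul_le_spikeThreshold (s t : ℕ) :
    (2 * s + 1) ^ (t - 1) * (6 * (s + t) + 2) ≤ spikeThreshold s t := by
  refine Nat.mul_le_mul_right _ ?_
  calc (2 * s + 1) ^ (t - 1) ≤ (2 * (s + t) + 1) ^ (t - 1) := by gcongr; omega
    _ ≤ (2 * (s + t) + 1) ^ (s + t) := by gcongr <;> omega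

theorem two_mul_add_le_spikeThreshold (s t : ℕ) : 2 * (s + t) ≤ spikeThreshold s t := by
  have hpow : 0 < (2 * (s + t) + 1) ^ (s + t) := by positivity
  calc 2 * (s + t) ≤ 6 * (s + t) + 2 := by omega
    _ ≤ spikeThreshold s t := Nat.le_mul_of_pos_left _ hpow

theorem hasSparseMembersAt_of_hasProp [DecidableEq α] (h : M.HasProp s (2 * s) t (2 * t))
    (hs : 0 < s) (ht : 0 < t) (hE : (spikeThreshold s t : ℕ∞) ≤ M.E.encard) (hx : x ∈ M.E) :
    HasSparseMembersAt (circuitsOfCard M✶ (2 * t)) (6 * (s + t)) x := by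
  have hsE : (s : ℕ∞) ≤ M.E.encard :=
    le_trans (mod_cast (by have := two_mul_add_le_spikeThreshold s t; omega)) hE
  have hcov := isCoveredByCircuits_of_hasProp h hs (by omega) hsE
  exact hcov.hasSparseMembersAt ht
    (fun T hT hTc => exists_mem_circuitsOfCard_superset (hasProp_dual h) (by omega) hT hTc) hx
    (le_trans (mod_cast pow_mul_le_spikeThreshold s t) hE)

theorem isSparseOrthogonalPairAt_of_hasProp [DecidableEq α] (h : M.HasProp s (2 * s) t (2 * t))
    (hs : 0 < s) (ht : 0 < t) (hE : (spikeThreshold s t : ℕ∞) ≤ M.E.encard) (hx : x ∈ M.E) :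
    IsSparseOrthogonalPairAt (circuitsOfCard M (2 * s)) (circuitsOfCard M✶ (2 * t))
      (6 * (s + t)) x where
  two_le_card_inter _ hC _ hD := two_le_card_inter_of_isCocircuit hC.1 hD.1
  card_left_le C hC := by rw [hC.2]; omega
  card_right_le D hD := by rw [hD.2]; omega
  sparse_left := by
    have hsparse := hasSparseMembersAt_of_hasProp (hasProp_dual h) ht hs
      (by rwa [spikeThreshold_comm]) hx
    rwa [dual_dual, add_comm t s] at hsparse
  sparse_right := hasSparseMembersAt_of_hasProp h hs ht hE hx

theorem ncard_sUnion_of_pairwiseDisjoint {𝓑 : Finset (Set α)} (hk : k ≠ 0)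
    (hdis : (𝓑 : Set (Set α)).PairwiseDisjoint id) (h𝓑 : ∀ B ∈ 𝓑, B.ncard = k) :
    (⋃₀ (𝓑 : Set (Set α))).ncard = 𝓑.card * k := by
  have hfin : ∀ B ∈ (𝓑 : Set (Set α)), B.Finite := fun B hB =>
    Set.finite_of_ncard_ne_zero (by rwa [h𝓑 B hB])
  rw [Set.sUnion_eq_biUnion, 𝓑.finite_toSet.ncard_biUnion hfin hdis,
    finsum_mem_coe_finset, Finset.sum_congr rfl h𝓑, Finset.sum_const, smul_eq_mul]

theorem encard_sUnion_le_mul {𝒜 : Set (Set α)} (hk : k ≠ 0) (h𝒜 : ∀ B ∈ 𝒜, B.ncard = k) :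
    (⋃₀ 𝒜).encard ≤ 𝒜.encard * k := by
  obtain hinf | hfin := 𝒜.infinite_or_finite
  · simp [hinf.encard_eq, hk]
  · lift 𝒜 to Finset (Set α) using hfin
    have hB : ∀ B ∈ 𝒜, B.encard = k := fun B hB => by
      rw [← (Set.finite_of_ncard_ne_zero (by rwa [h𝒜 B hB])).cast_ncard_eq, h𝒜 B hB]
    rw [Set.sUnion_eq_biUnion]
    refine (Finset.set_encard_biUnion_le 𝒜 id).trans_eq ?_
    rw [Set.encard_coe_eq_coe_finsetCard, ← nsmul_eq_mul]
    exact Finset.sum_eq_card_nsmul hB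

theorem exists_mem_coe_eq_sUnion_familyHull {E : Set α} {𝒞 : Set (Finset α)}
    (h𝒞 : ∀ S : Finset α, (S : Set α) ⊆ E → S.card = s → ∃ C ∈ 𝒞, S ⊆ C)
    (hk : k ≠ 0) (hcard : ∀ C ∈ 𝒞, C.card = k * s) (hE : ∀ x ∈ E, familyHull 𝒞 x ⊆ E)
    (hncard : ∀ x ∈ E, (familyHull 𝒞 x).ncard = k) {𝓑 : Finset (Set α)}
    (h𝓑 : (𝓑 : Set (Set α)) ⊆ familyHull 𝒞 '' E) (hs : 𝓑.card = s) :
    ∃ C ∈ 𝒞, (C : Set α) = ⋃₀ (𝓑 : Set (Set α)) := by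
  classical
  obtain ⟨S, hSE, hinj, rfl⟩ := Finset.exists_subset_injOn_image_eq_of_surjOn E 𝓑 h𝓑
  rw [Finset.card_image_of_injOn hinj] at hs
  obtain ⟨C, hC, hSC⟩ := h𝒞 S hSE hs
  have hsub : ⋃₀ (↑(S.image (familyHull 𝒞)) : Set (Set α)) ⊆ C := by
    rintro y ⟨_, hB, hy⟩
    obtain ⟨x, hx, rfl⟩ := Finset.mem_image.1 hB
    exact hy C hC (hSC hx)
  have hUnion := ncard_sUnion_of_pairwiseDisjoint hk
    ((pairwiseDisjoint_image_familyHull hk hE hncard).subset h𝓑)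
    fun B hB => by obtain ⟨x, hx, rfl⟩ := h𝓑 hB; exact hncard x hx
  refine ⟨C, hC, (Set.eq_of_subset_of_ncard_le hsub ?_ C.finite_toSet).symm⟩
  rw [hUnion, Finset.card_image_of_injOn hinj, hs, Set.ncard_coe_finset, hcard C hC, mul_comm]

/-- The set `𝒜` is the set of arms of an `(s,t)`-spike on the ground set of `M`. This is
`Matroid.IsSpike` for an unindexed and possibly infinite partition. -/
structure IsSpikePartition (M : Matroid α) (s t : ℕ) (𝒜 : Set (Set α)) : Prop where
  max_le_encard : ((max s t : ℕ) : ℕ∞) ≤ 𝒜.encard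
  sUnion_eq : ⋃₀ 𝒜 = M.E
  pairwiseDisjoint : 𝒜.PairwiseDisjoint id
  ncard_eq_two : ∀ B ∈ 𝒜, B.ncard = 2
  isCircuit_sUnion : ∀ 𝓑 : Finset (Set α), (𝓑 : Set (Set α)) ⊆ 𝒜 → 𝓑.card = s →
    M.IsCircuit (⋃₀ (𝓑 : Set (Set α)))
  isCocircuit_sUnion : ∀ 𝓑 : Finset (Set α), (𝓑 : Set (Set α)) ⊆ 𝒜 → 𝓑.card = t →
    M.IsCocircuit (⋃₀ (𝓑 : Set (Set α)))

theorem IsSpikePartition.exists_isSpike {𝒜 : Set (Set α)} (h : IsSpikePartition M s t 𝒜)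
    (hE : M.E.Finite) : ∃ (m : ℕ) (A : Fin m → Set α), M.IsSpike s t A := by
  classical
  lift 𝒜 to Finset (Set α) using hE.finite_subsets.subset fun B hB =>
    (Set.subset_sUnion_of_mem hB).trans h.sUnion_eq.subset
  let A : Fin 𝒜.card → Set α := fun i => 𝒜.equivFin.symm i
  have hA : ∀ i, A i ∈ 𝒜 := fun i => (𝒜.equivFin.symm i).2
  have hinj : Injective A := Subtype.val_injective.comp 𝒜.equivFin.symm.injective
  have hrange : range A = 𝒜 := by
    rw [show A = Subtype.val ∘ 𝒜.equivFin.symm from rfl, 𝒜.equivFin.symm.surjective.range_comp,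
      Subtype.range_coe]
  have hsub : ∀ I : Finset (Fin 𝒜.card), (↑(I.image A) : Set (Set α)) ⊆ 𝒜 := fun I => by
    rw [Finset.coe_image, ← hrange]
    exact image_subset_range A I
  have hcard : ∀ I : Finset (Fin 𝒜.card), (I.image A).card = I.card :=
    fun I => Finset.card_image_of_injective I hinj
  have hUnion : ∀ I : Finset (Fin 𝒜.card),
      ⋃ i ∈ I, A i = ⋃₀ (↑(I.image A) : Set (Set α)) := fun I => by
    rw [Finset.coe_image, sUnion_image]
    rfl
  refine ⟨𝒜.card, A, ?_, ?_, ?_, fun i => h.ncard_eq_two _ (hA i), fun I hI => ?_, fun I hI => ?_⟩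
  · simpa only [Set.encard_coe_eq_coe_finsetCard, Nat.cast_le] using h.max_le_encard
  · rw [← sUnion_range, hrange, h.sUnion_eq]
  · exact fun i j hij => h.pairwiseDisjoint (hA i) (hA j) (hinj.ne hij)
  · exact hUnion I ▸ h.isCircuit_sUnion _ (hsub I) ((hcard I).trans hI)
  · exact hUnion I ▸ h.isCocircuit_sUnion _ (hsub I) ((hcard I).trans hI)

section HasProp

variable (h : M.HasProp s (2 * s) t (2 * t)) (hs : 0 < s) (ht : 0 < t)
  (hE : (spikeThreshold s t : ℕ∞) ≤ M.E.encard)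

include h hs ht hE

theorem ncard_familyHull_circuitsOfCard (hx : x ∈ M.E) :
    (familyHull (circuitsOfCard M (2 * s)) x).ncard = 2 := by
  classical
  exact (isSparseOrthogonalPairAt_of_hasProp h hs ht hE hx).ncard_familyHull

theorem familyHull_circuitsOfCard_subset_ground (hx : x ∈ M.E) :
    familyHull (circuitsOfCard M (2 * s)) x ⊆ M.E := by
  classical
  intro y hy
  obtain ⟨C, hC, -, -, hxC, -⟩ :=
    (isSparseOrthogonalPairAt_of_hasProp h hs ht hE hx).exists_card_inter_le_two
  exact hC.1.subset_ground (hy C hC hxC)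

theorem familyHull_circuitsOfCard_dual (hx : x ∈ M.E) :
    familyHull (circuitsOfCard M✶ (2 * t)) x = familyHull (circuitsOfCard M (2 * s)) x := by
  classical
  exact (isSparseOrthogonalPairAt_of_hasProp h hs ht hE hx).familyHull_eq.symm

theorem isCircuit_sUnion_familyHull {𝓑 : Finset (Set α)}
    (h𝓑 : (𝓑 : Set (Set α)) ⊆ familyHull (circuitsOfCard M (2 * s)) '' M.E)
    (hcard : 𝓑.card = s) : M.IsCircuit (⋃₀ (𝓑 : Set (Set α))) := by
  obtain ⟨C, hC, hC𝓑⟩ := exists_mem_coe_eq_sUnion_familyHull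
    (fun S hS hSc => exists_mem_circuitsOfCard_superset h (by omega) hS hSc)
    two_ne_zero (fun C hC => hC.2) (fun x => familyHull_circuitsOfCard_subset_ground h hs ht hE)
    (fun x => ncard_familyHull_circuitsOfCard h hs ht hE) h𝓑 hcard
  exact hC𝓑 ▸ hC.1

theorem sUnion_image_familyHull :
    ⋃₀ (familyHull (circuitsOfCard M (2 * s)) '' M.E) = M.E := by
  refine Set.Subset.antisymm (sUnion_subset ?_)
    fun x hx => ⟨_, mem_image_of_mem _ hx, mem_familyHull_self _ x⟩
  rintro _ ⟨x, hx, rfl⟩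
  exact familyHull_circuitsOfCard_subset_ground h hs ht hE hx

theorem add_le_encard_image_familyHull :
    ((s + t : ℕ) : ℕ∞) ≤ (familyHull (circuitsOfCard M (2 * s)) '' M.E).encard := by
  have hncard : ∀ B ∈ familyHull (circuitsOfCard M (2 * s)) '' M.E, B.ncard = 2 :=
    forall_mem_image.2 fun _ => ncard_familyHull_circuitsOfCard h hs ht hE
  have hle := encard_sUnion_le_mul two_ne_zero hncard
  rw [sUnion_image_familyHull h hs ht hE] at hle
  refine (ENat.mul_le_mul_right_iff (a := ((2 : ℕ) : ℕ∞)) two_ne_zero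
    (ENat.natCast_ne_top 2)).1 (le_trans ?_ (hE.trans hle))
  rw [← Nat.cast_mul, mul_comm]
  exact Nat.cast_le.2 (two_mul_add_le_spikeThreshold s t)

end HasProp

theorem statement0_general {α : Type*} {M : Matroid α} {s t : ℕ} (hs : 0 < s) (ht : 0 < t)
    (h : M.HasProp s (2 * s) t (2 * t)) (hE : (spikeThreshold s t : ℕ∞) ≤ M.E.encard) :
    IsSpikePartition M s t (familyHull (circuitsOfCard M (2 * s)) '' M.E) where
  max_le_encard := (Nat.cast_le.2 (by omega)).trans (add_le_encard_image_familyHull h hs ht hE)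
  sUnion_eq := sUnion_image_familyHull h hs ht hE
  pairwiseDisjoint := pairwiseDisjoint_image_familyHull two_ne_zero
    (fun _ => familyHull_circuitsOfCard_subset_ground h hs ht hE)
    fun _ => ncard_familyHull_circuitsOfCard h hs ht hE
  ncard_eq_two := forall_mem_image.2 fun _ => ncard_familyHull_circuitsOfCard h hs ht hE
  isCircuit_sUnion _ := isCircuit_sUnion_familyHull h hs ht hE
  isCocircuit_sUnion 𝓑 h𝓑 := by
    rw [← image_congr fun x => familyHull_circuitsOfCard_dual h hs ht hE] at h𝓑
    exact isCircuit_sUnion_familyHull (hasProp_dual h) ht hs (by rwa [spikeThreshold_comm]) h𝓑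

end Matroids

/-- There exists `f : ℕ × ℕ → ℕ` such that every (finite) matroid `M` with the
`(s,2s,t,2t)`-property and `|E(M)| ≥ f(s,t)` is an `(s,t)`-spike. -/
theorem statement0 :
    ∃ f : ℕ × ℕ → ℕ, ∀ (s t : ℕ), 0 < s → 0 < t →
      ∀ {α : Type u} (M : Matroid α), M.E.Finite →
        M.HasProp s (2 * s) t (2 * t) → f (s, t) ≤ M.E.ncard →
        ∃ (m : ℕ) (A : Fin m → Set α), M.IsSpike s t A :=
  ⟨fun p => spikeThreshold p.1 p.2, fun _ _ hs ht _ _ hE hM hn =>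
    (statement0_general hs ht hM (hE.cast_ncard_eq ▸ Nat.cast_le.2 hn)).exists_isSpike hE⟩
end

section
/- Let s and t be positive integers, let M be a matroid with the (s,2s,t,2t)-property, and let C*_1, C*_2, …, C*_{s−1} be pairwise disjoint cocircuits of M. Let Y = E(M) − ⋃_{i∈[s−1]} C*_i. Then for every y ∈ Y there is a 2s-element circuit C_y of M containing y such that either (1) |C_y ∩ C*_i| = 2 for all i ∈ [s−1], or (2) |C_y ∩ C*_j| = 3 for some j ∈ [s−1] and |C_y ∩ C*_i| = 2 for all i ∈ [s−1] − {j}. Moreover, if C_y satisfies (2), then there are at most s + 2t − 1 elements w ∈ Y such that (C_y − {y}) ∪ {w} is a circuit of M. -/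
open Set Function

universe u

open Matroid

/-!
Everything rests on the fact that a circuit and a cocircuit never meet in exactly one element.

A `2s`-element circuit `D` through `y` and one element of each `C i` therefore meets each of these
`s - 1` disjoint sets at least twice. This uses `2s - 2` of the `2s - 1` elements of `D` other than
`y`, so at most one `C i` is met a third time.

The same fact shows that adjoining one element from each of a family of disjoint cocircuits to a
set avoiding them raises the rank by the size of the family. The set `W` of elements that may
replace `y` lies in the closure of `D`, which has rank `2s - 1`, and avoids every `C i`, so its rank
is at most `s`. If `W` had `s + 2t` elements, deleting a `2t`-element cocircuit that meets it would
lower its rank and leave at least `s` elements. But `s`-element sets are independent, being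
properly contained in `2s`-element circuits, so `W` would have rank at least `s + 1`.
-/

section

variable {ι : Type*} [Fintype ι]

theorem eq_or_exists_eq_add_one_of_sum_le_sum_add_one {f g : ι → ℕ} (hgf : ∀ i, g i ≤ f i)
    (hsum : ∑ i, f i ≤ ∑ i, g i + 1) :
    (∀ i, f i = g i) ∨ ∃ j, f j = g j + 1 ∧ ∀ i, i ≠ j → f i = g i := by
  classical
  refine or_iff_not_imp_left.2 fun hne ↦ ?_
  obtain ⟨j, hj⟩ := not_forall.1 hne
  have hgj : g j < f j := (hgf j).lt_of_ne' hj
  have hrest : ∑ i ∈ Finset.univ.erase j, g i ≤ ∑ i ∈ Finset.univ.erase j, f i :=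
    Finset.sum_le_sum fun i _ ↦ hgf i
  have hf := Finset.add_sum_erase _ f (Finset.mem_univ j)
  have hg := Finset.add_sum_erase _ g (Finset.mem_univ j)
  have heq := (Finset.sum_eq_sum_iff_of_le fun i _ ↦ hgf i).1
    (show ∑ i ∈ Finset.univ.erase j, g i = ∑ i ∈ Finset.univ.erase j, f i by omega)
  exact ⟨j, by omega, fun i hij ↦ (heq i (Finset.mem_erase.2 ⟨hij, Finset.mem_univ i⟩)).symm⟩

theorem sum_ncard_inter_le_ncard {α : Type*} {D : Set α} (hD : D.Finite) {C : ι → Set α}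
    (hdj : Pairwise (Disjoint on C)) : ∑ i, (D ∩ C i).ncard ≤ D.ncard := by
  rw [← finsum_eq_sum_of_fintype, ← Set.ncard_iUnion_of_finite (fun i ↦ hD.inter_of_left _)
    (fun i j hij ↦ (hdj hij).mono inter_subset_right inter_subset_right)]
  exact ncard_le_ncard (iUnion_subset fun i ↦ inter_subset_left) hD

end

theorem injective_of_pairwise_disjoint_of_forall_mem {α ι : Type*} {C : ι → Set α} {c : ι → α}
    (hdj : Pairwise (Disjoint on C)) (hc : ∀ i, c i ∈ C i) : Injective c :=
  fun i j hij ↦ hdj.eq (not_disjoint_iff.2 ⟨c i, hc i, hij ▸ hc j⟩)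

section

variable {α ι : Type*} {M : Matroid α} {C : ι → Set α} {D F J X : Set α} {y : α} {s t u v : ℕ}

theorem indep_of_forall_exists_inter_isCocircuit_eq_singleton (hJ : M.Indep J)
    (hX : ∀ x ∈ X \ J, ∃ K, M.IsCocircuit K ∧ X ∩ K = {x}) : M.Indep X := by
  have hXE : X ⊆ M.E := by
    intro x hxX
    by_cases hxJ : x ∈ J
    · exact hJ.subset_ground hxJ
    · obtain ⟨K, hK, hXK⟩ := hX x ⟨hxX, hxJ⟩
      exact hK.subset_ground (singleton_subset_iff.1 (hXK ▸ inter_subset_right))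
  rw [indep_iff_forall_subset_not_isCircuit hXE]
  intro D hDX hD
  obtain ⟨x, hxD, hxJ⟩ := not_subset.1 fun hDJ ↦ hD.not_indep (hJ.subset hDJ)
  obtain ⟨K, hK, hXK⟩ := hX x ⟨hDX hxD, hxJ⟩
  have hxK : x ∈ K := singleton_subset_iff.1 (hXK ▸ inter_subset_right)
  refine hD.inter_isCocircuit_ne_singleton hK (e := x) (Subset.antisymm ?_ ?_)
  · exact hXK ▸ inter_subset_inter_left K hDX
  · exact singleton_subset_iff.2 ⟨hxD, hxK⟩

theorem indep_union_range_of_forall_isCocircuit {c : ι → α} (hJ : M.Indep J)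
    (hC : ∀ i, M.IsCocircuit (C i)) (hdj : Pairwise (Disjoint on C))
    (hJC : ∀ i, Disjoint J (C i)) (hc : ∀ i, c i ∈ C i) : M.Indep (J ∪ range c) := by
  refine indep_of_forall_exists_inter_isCocircuit_eq_singleton hJ ?_
  rintro x ⟨hxJ | ⟨i, rfl⟩, hxJ'⟩
  · exact absurd hxJ hxJ'
  refine ⟨C i, hC i, Subset.antisymm ?_ (singleton_subset_iff.2 ⟨.inr ⟨i, rfl⟩, hc i⟩)⟩
  rintro _ ⟨hxJ | ⟨j, rfl⟩, hxC⟩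
  · exact absurd hxC ((hJC i).notMem_of_mem_left hxJ)
  · rw [mem_singleton_iff, hdj.eq (not_disjoint_iff.2 ⟨c j, hc j, hxC⟩)]

theorem eRk_add_card_le_eRk_of_pairwise_disjoint (hC : ∀ i, M.IsCocircuit (C i))
    (hdj : Pairwise (Disjoint on C)) (hXF : X ⊆ F) (hXC : ∀ i, Disjoint X (C i))
    (hFC : ∀ i, (F ∩ C i).Nonempty) :
    M.eRk X + ENat.card ι ≤ M.eRk F := by
  choose c hcF hcC using hFC
  obtain ⟨J, hJ⟩ := M.exists_isBasis' X
  have hJC (i) : Disjoint J (C i) := (hXC i).mono_left hJ.subset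
  have hindep := indep_union_range_of_forall_isCocircuit hJ.indep hC hdj hJC hcC
  have hcinj := injective_of_pairwise_disjoint_of_forall_mem hdj hcC
  have hJc : Disjoint J (range c) :=
    disjoint_right.2 (forall_mem_range.2 fun i ↦ (hJC i).notMem_of_mem_right (hcC i))
  calc M.eRk X + ENat.card ι
      = (J ∪ range c).encard := by
        rw [encard_union_eq hJc, hJ.encard_eq_eRk,
          ← image_univ, hcinj.encard_image, encard_univ]
    _ ≤ M.eRk F := hindep.encard_le_eRk_of_subset
        (union_subset (hJ.subset.trans hXF) (range_subset_iff.2 hcF))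

theorem eRk_sdiff_add_one_le_eRk {K : Set α} (hK : M.IsCocircuit K) (hXK : (X ∩ K).Nonempty) :
    M.eRk (X \ K) + 1 ≤ M.eRk X := by
  simpa only [ENat.card_eq_coe_fintype_card, Fintype.card_unit, Nat.cast_one] using
    eRk_add_card_le_eRk_of_pairwise_disjoint (ι := Unit) (fun _ ↦ hK) Subsingleton.pairwise
      sdiff_subset (fun _ ↦ disjoint_sdiff_left) (fun _ ↦ hXK)

theorem eRk_add_card_add_one_le_encard_of_subset_closure (hD : M.IsCircuit D)
    (hC : ∀ i, M.IsCocircuit (C i)) (hdj : Pairwise (Disjoint on C))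
    (hDC : ∀ i, (D ∩ C i).Nonempty) (hX : X ⊆ M.closure D) (hXC : ∀ i, Disjoint X (C i)) :
    M.eRk X + ENat.card ι + 1 ≤ D.encard := by
  have hFC (i) : (M.closure D ∩ C i).Nonempty :=
    (hDC i).mono (inter_subset_inter_left _ (M.subset_closure D hD.subset_ground))
  rw [← hD.eRk_add_one_eq, ← M.eRk_closure_eq D]
  gcongr
  exact eRk_add_card_le_eRk_of_pairwise_disjoint hC hdj hX hXC hFC

theorem mem_closure_of_isCircuit_union_singleton {w : α} (hw : M.IsCircuit (X ∪ {w})) :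
    w ∈ M.closure X := by
  refine M.closure_subset_closure ?_ (hw.mem_closure_sdiff_singleton_of_mem (.inr rfl))
  rw [union_sdiff_right]
  exact sdiff_subset

theorem forall_ncard_inter_eq_two_or_exists_eq_three [Fintype ι] (hD : M.IsCircuit D)
    (hDfin : D.Finite) (hDcard : D.ncard ≤ 2 * (Fintype.card ι + 1))
    (hC : ∀ i, M.IsCocircuit (C i)) (hdj : Pairwise (Disjoint on C))
    (hDC : ∀ i, (D ∩ C i).Nonempty) (hyD : y ∈ D) (hyC : ∀ i, y ∉ C i) :
    (∀ i, (D ∩ C i).ncard = 2) ∨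
      ∃ j, (D ∩ C j).ncard = 3 ∧ ∀ i, i ≠ j → (D ∩ C i).ncard = 2 := by
  have htwo (i) : 2 ≤ (D ∩ C i).ncard :=
    one_lt_ncard_iff_nontrivial_and_finite.2
      ⟨hD.isCocircuit_inter_nontrivial (hC i) (hDC i), hDfin.inter_of_left _⟩
  have herase (i) : (D \ {y}) ∩ C i = D ∩ C i := by
    rw [← inter_sdiff_right_comm, sdiff_singleton_eq_self fun h ↦ hyC i h.2]
  have hsum : ∑ i, (D ∩ C i).ncard ≤ D.ncard - 1 := by
    simpa only [herase, ncard_sdiff_singleton_of_mem hyD] using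
      sum_ncard_inter_le_ncard (hDfin.sdiff (t := {y})) hdj
  refine eq_or_exists_eq_add_one_of_sum_le_sum_add_one htwo ?_
  simp only [Finset.sum_const, Finset.card_univ, smul_eq_mul]
  omega

-- `IsCircuit'` and `IsCocircuit'`, used by `HasProp`, unfold to Mathlib's `IsCircuit` and
-- `IsCocircuit`; from here on the two pairs are identified definitionally.
theorem indep_of_hasProp (hM : M.HasProp s u t v) (hsu : s ≠ u) (hX : X ⊆ M.E)
    (hXcard : X.ncard = s) : M.Indep X := by
  obtain ⟨D, hD, hDcard, hXD⟩ := hM.1 X hX hXcard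
  refine IsCircuit.ssubset_indep hD (hXD.ssubset_of_ne ?_)
  rintro rfl
  omega

theorem exists_isCircuit_mem_forall_inter_nonempty [Fintype ι]
    (hM : M.HasProp (Fintype.card ι + 1) u t v) (hC : ∀ i, M.IsCocircuit (C i))
    (hdj : Pairwise (Disjoint on C)) (hyE : y ∈ M.E) (hyC : ∀ i, y ∉ C i) :
    ∃ D, M.IsCircuit D ∧ D.ncard = u ∧ y ∈ D ∧ ∀ i, (D ∩ C i).Nonempty := by
  choose c hc using fun i ↦ (hC i).nonempty
  have hy : y ∉ range c := by
    rintro ⟨i, rfl⟩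
    exact hyC i (hc i)
  have hcard : (insert y (range c)).ncard = Fintype.card ι + 1 := by
    rw [ncard_insert_of_notMem hy (finite_range c), ← image_univ, ncard_image_of_injective _
      (injective_of_pairwise_disjoint_of_forall_mem hdj hc), ncard_univ, Nat.card_eq_fintype_card]
  obtain ⟨D, hD, hDcard, hsub⟩ := hM.1 (insert y (range c))
    (insert_subset hyE (range_subset_iff.2 fun i ↦ (hC i).subset_ground (hc i))) hcard
  exact ⟨D, hD, hDcard, hsub (mem_insert _ _),
    fun i ↦ ⟨c i, hsub (mem_insert_of_mem _ (mem_range_self i)), hc i⟩⟩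

theorem natCast_le_eRk_of_hasProp (hM : M.HasProp s u t v) (hsu : s ≠ u) (hX : X ⊆ M.E)
    (hXcard : s ≤ X.encard) : s ≤ M.eRk X := by
  obtain ⟨I, hIX, hI⟩ := exists_subset_encard_eq hXcard
  have hIcard : I.ncard = s := by rw [ncard, hI, ENat.toNat_natCast]
  exact hI ▸ (indep_of_hasProp hM hsu (hIX.trans hX) hIcard).encard_le_eRk_of_subset hIX

theorem encard_lt_add_of_hasProp_of_eRk_le (hM : M.HasProp s u t v) (hsu : s ≠ u) (ht : 0 < t)
    (htv : t ≤ v) (hX : X ⊆ M.E) (hXrk : M.eRk X ≤ s) : X.encard < s + v := by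
  by_contra! hcard
  have htX : (t : ℕ∞) ≤ X.encard :=
    le_trans (by exact_mod_cast htv.trans (Nat.le_add_left v s)) hcard
  obtain ⟨T, hTX, hT⟩ := exists_subset_encard_eq htX
  have hTcard : T.ncard = t := by rw [ncard, hT, ENat.toNat_natCast]
  obtain ⟨K, hK, hKcard, hTK⟩ := hM.2 T (hTX.trans hX) hTcard
  have hmeet : (X ∩ K).Nonempty :=
    (nonempty_of_ncard_ne_zero (by omega)).mono (subset_inter hTX hTK)
  have hKencard : K.encard = v := by
    rw [← hKcard, (finite_of_ncard_ne_zero (by omega)).cast_ncard_eq]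
  have hsdiff : (s : ℕ∞) ≤ (X \ K).encard :=
    (ENat.add_le_add_iff_right (ENat.natCast_ne_top v)).1 <|
      hcard.trans (hKencard ▸ encard_le_encard_sdiff_add_encard X K)
  have hlt : (s : ℕ∞) + 1 ≤ s :=
    calc (s : ℕ∞) + 1
        ≤ M.eRk (X \ K) + 1 := by
          gcongr
          exact natCast_le_eRk_of_hasProp hM hsu (sdiff_subset.trans hX) hsdiff
      _ ≤ M.eRk X := eRk_sdiff_add_one_le_eRk hK hmeet
      _ ≤ s := hXrk
  exact absurd hlt (by exact_mod_cast Nat.not_succ_le_self s)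

theorem encard_setOf_isCircuit_sdiff_union_singleton_lt [Fintype ι]
    (hM : M.HasProp (Fintype.card ι + 1) u t v) (hu : Fintype.card ι + 1 ≠ u) (ht : 0 < t)
    (htv : t ≤ v) (hD : M.IsCircuit D) (hDfin : D.Finite)
    (hDcard : D.ncard ≤ 2 * (Fintype.card ι + 1)) (hC : ∀ i, M.IsCocircuit (C i))
    (hdj : Pairwise (Disjoint on C)) (hDC : ∀ i, (D ∩ C i).Nonempty) :
    {w | w ∈ M.E \ ⋃ i, C i ∧ M.IsCircuit (D \ {y} ∪ {w})}.encard
      < (Fintype.card ι + 1 : ℕ) + v := by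
  set W := {w | w ∈ M.E \ ⋃ i, C i ∧ M.IsCircuit (D \ {y} ∪ {w})}
  have hWC (i) : Disjoint W (C i) :=
    disjoint_left.2 fun w hw hwC ↦ hw.1.2 (mem_iUnion_of_mem i hwC)
  have hWcl : W ⊆ M.closure D := fun w hw ↦
    M.closure_subset_closure sdiff_subset (mem_closure_of_isCircuit_union_singleton hw.2)
  have hWrk : M.eRk W ≤ (Fintype.card ι + 1 : ℕ) := by
    refine (ENat.add_le_add_iff_right (ENat.natCast_ne_top (Fintype.card ι + 1))).1 ?_
    calc M.eRk W + (Fintype.card ι + 1 : ℕ)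
        = M.eRk W + ENat.card ι + 1 := by
          rw [ENat.card_eq_coe_fintype_card, Nat.cast_add_one, add_assoc]
      _ ≤ D.ncard := by
          rw [hDfin.cast_ncard_eq]
          exact eRk_add_card_add_one_le_encard_of_subset_closure hD hC hdj hDC hWcl hWC
      _ ≤ (Fintype.card ι + 1 : ℕ) + (Fintype.card ι + 1 : ℕ) := by
          exact_mod_cast hDcard.trans_eq (two_mul _)
  exact encard_lt_add_of_hasProp_of_eRk_le hM hu ht htv (fun w hw ↦ hw.1.1) hWrk

theorem statement7_general [Fintype ι] (hs : Fintype.card ι + 1 = s) (ht : 0 < t)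
    (hM : M.HasProp s (2 * s) t (2 * t)) (hC : ∀ i, M.IsCocircuit (C i))
    (hdj : Pairwise (Disjoint on C)) (hy : y ∈ M.E \ ⋃ i, C i) :
    ∃ D, M.IsCircuit D ∧ D.ncard = 2 * s ∧ y ∈ D ∧
      ((∀ i, (D ∩ C i).ncard = 2) ∨
        ∃ j, (D ∩ C j).ncard = 3 ∧ ∀ i, i ≠ j → (D ∩ C i).ncard = 2) ∧
      {w | w ∈ M.E \ ⋃ i, C i ∧ M.IsCircuit (D \ {y} ∪ {w})}.encard ≤ s + 2 * t - 1 := by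
  subst hs
  have hyC (i) : y ∉ C i := fun h ↦ hy.2 (mem_iUnion_of_mem i h)
  obtain ⟨D, hD, hDcard, hyD, hDC⟩ :=
    exists_isCircuit_mem_forall_inter_nonempty hM hC hdj hy.1 hyC
  have hDfin : D.Finite := finite_of_ncard_ne_zero (by omega)
  refine ⟨D, hD, hDcard, hyD, forall_ncard_inter_eq_two_or_exists_eq_three hD hDfin hDcard.le
    hC hdj hDC hyD hyC, ENat.le_sub_one_of_lt ?_⟩
  exact_mod_cast encard_setOf_isCircuit_sdiff_union_singleton_lt hM (by omega) ht (by omega)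
    hD hDfin hDcard.le hC hdj hDC

end

/-- Let `M` have the `(s,2s,t,2t)`-property and let `C 1, …, C (s−1)` be pairwise
disjoint cocircuits, with `Y = E(M) − ⋃ᵢ C i`.  Every `y ∈ Y` lies in a `2s`-element circuit
`Cy` meeting each `C i` in exactly two elements, except possibly one `C j` met in three
elements; moreover, in the latter case there are at most `s + 2t − 1` elements `w ∈ Y` such
that `(Cy − {y}) ∪ {w}` is a circuit. -/
theorem statement7 {α : Type u} (s t : ℕ) (hs : 0 < s) (ht : 0 < t)
    (M : Matroid α) (hE : M.E.Finite) (hM : M.HasProp s (2 * s) t (2 * t))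
    (C : Fin (s - 1) → Set α) (hC : ∀ i, M.IsCocircuit' (C i))
    (hdj : Pairwise (Function.onFun Disjoint C))
    (y : α) (hy : y ∈ M.E \ ⋃ i, C i) :
    ∃ Cy, M.IsCircuit' Cy ∧ Cy.ncard = 2 * s ∧ y ∈ Cy ∧
      ((∀ i, (Cy ∩ C i).ncard = 2) ∨
        (∃ j, (Cy ∩ C j).ncard = 3 ∧ ∀ i, i ≠ j → (Cy ∩ C i).ncard = 2)) ∧
      ((∃ j, (Cy ∩ C j).ncard = 3 ∧ ∀ i, i ≠ j → (Cy ∩ C i).ncard = 2) →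
        {w | w ∈ M.E \ ⋃ i, C i ∧ M.IsCircuit' ((Cy \ {y}) ∪ {w})}.ncard ≤ s + 2 * t - 1) := by
  obtain ⟨D, hD, hDcard, hyD, hDC, hW⟩ :=
    statement7_general (by rw [Fintype.card_fin]; omega) ht hM hC hdj hy
  exact ⟨D, hD, hDcard, hyD, hDC, fun _ ↦ ENat.toNat_le_of_le_natCast (by exact_mod_cast hW)⟩
end

section
/- Let s and t be positive integers and let M be a matroid with the (s,2s,t,2t)-property. Suppose M has s−1 pairwise disjoint 2t-element cocircuits C*_1, …, C*_{s−1} and, for some positive integer p, there is a set Z ⊆ E(M) − ⋃_{i∈[s−1]} C*_i such that (a) r(Z) ≥ (C(2t,2))^{s−1} · (p + 2(s−1)) (where C(2t,2) is the binomial coefficient), and (b) for each z ∈ Z there exists z' ∈ Z − {z} such that {z,z'} is contained in a 2s-element circuit C of M with |C ∩ C*_i| = 2 for each i ∈ [s−1]. Then there exists a subset Z' ⊆ Z and a partition π = (Z'_1, …, Z'_p) of Z' into p two-element sets such that (1) each circuit of the restriction M|Z' is a union of pairs in π, and (2) the union of any s pairs in π contains a circuit of M. -/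
open Set Function

universe u

open Matroid

/-!
There are only `C(2t,2)^(s-1)` possible traces of a `2s`-element circuit on the cocircuits, so by
pigeonhole many independent elements `z` of `Z` have circuits with one common trace `X`. As
`|X| = 2(s-1)`, such a circuit is `{z, z'} ∪ X`, and `{z, z'}` is a parallel pair of `M ／ X`.
Since contracting `X` lowers the rank by at most `|X|`, at least `p` of these `z` stay
independent in `M ／ X`.

No element of one of the `p` resulting pairs is spanned by the other pairs, so a circuit
containing one element of a pair contains the other. Finally, the union of `s` pairs and `X` has
rank at most `s + 2(s-1)`. Adding to an independent subset of the pairs one element of `X` from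
each cocircuit keeps it independent, because a circuit cannot meet a cocircuit in one element.
Were the union of `s` pairs independent, that rank would thus be at least `2s + (s-1)`.

Two-element traces can be replaced by `m`-element ones: then `|X| = m(s-1)`, and the union of any
`(m-1)(s-1) + 1` pairs is dependent.
-/

section Sets

variable {α β ι : Type*} [Fintype ι] {m : ℕ} {K : ι → Set α}

theorem encard_eq_of_ncard_eq {s : Set α} {n : ℕ} (hn : n ≠ 0) (hs : s.ncard = n) :
    s.encard = n := by
  rw [← (finite_of_ncard_ne_zero (hs ▸ hn)).cast_ncard_eq, hs]

theorem encard_iUnion_of_forall_encard_eq {s : ι → Set α} {c : ℕ∞}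
    (hdj : Pairwise (Disjoint on s)) (hs : ∀ i, (s i).encard = c) :
    (⋃ i, s i).encard = Fintype.card ι * c := by
  simp [encard_iUnion_of_finite hdj, finsum_eq_sum_of_fintype, hs]

theorem sdiff_eq_iUnion_inter_of_encard_eq {C D : Set α} (hC : C.Finite)
    (hdj : Pairwise (Disjoint on K)) (hDC : D ⊆ C) (hDK : ∀ i, Disjoint D (K i))
    (hCK : ∀ i, (C ∩ K i).encard = m) (hcard : C.encard = Fintype.card ι * m + D.encard) :
    C \ D = ⋃ i, C ∩ K i := by
  have hsub : ⋃ i, C ∩ K i ⊆ C \ D := iUnion_subset fun i ↦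
    subset_sdiff.2 ⟨inter_subset_left, (hDK i).symm.mono_left inter_subset_right⟩
  have hinter : (⋃ i, C ∩ K i).encard = Fintype.card ι * m :=
    encard_iUnion_of_forall_encard_eq
      (fun i j hij ↦ (hdj hij).mono inter_subset_right inter_subset_right) hCK
  have hsdiff : (C \ D).encard + D.encard = Fintype.card ι * m + D.encard := by
    rw [encard_sdiff_add_encard_of_subset hDC, hcard]
  refine (hC.sdiff.eq_of_subset_of_encard_le' hsub ?_).symm
  rw [hinter, WithTop.add_right_cancel (hC.subset hDC).encard_lt_top.ne hsdiff]

theorem exists_subset_forall_inter_eq {k q : ℕ} {S : Finset β} {C : β → Set α} (hmk : m ≤ k)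
    (hK : ∀ i, (K i).encard = k) (hC : ∀ b ∈ S, ∀ i, (C b ∩ K i).encard = m)
    (hS : k.choose m ^ Fintype.card ι * q ≤ S.card) :
    ∃ J ⊆ S, q ≤ J.card ∧ ∃ Y : ι → Set α,
      (∀ i, Y i ⊆ K i) ∧ (∀ i, (Y i).encard = m) ∧ ∀ b ∈ J, ∀ i, C b ∩ K i = Y i := by
  classical
  lift K to ι → Finset α using fun i ↦ finite_of_encard_eq_coe (hK i)
  simp only [encard_coe_eq_coe_finsetCard, Nat.cast_inj] at hK
  let traces : Finset (ι → Finset α) := Fintype.piFinset fun i ↦ (K i).powersetCard m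
  have hcard : traces.card = k.choose m ^ Fintype.card ι := by
    simp [traces, Fintype.card_piFinset, hK]
  let trace (b : β) (i : ι) : Finset α := {x ∈ K i | x ∈ C b}
  have coe_trace (b : β) (i : ι) : (trace b i : Set α) = C b ∩ K i := by
    ext; simp [trace, and_comm]
  have htrace : ∀ b ∈ S, trace b ∈ traces := fun b hb ↦
    Fintype.mem_piFinset.2 fun i ↦ Finset.mem_powersetCard.2 ⟨Finset.filter_subset _ _, by
      rw [← Nat.cast_inj (R := ℕ∞), ← encard_coe_eq_coe_finsetCard, coe_trace, hC b hb i]⟩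
  obtain ⟨Y, hY, hq⟩ := Finset.exists_le_card_fiber_of_mul_le_card_of_maps_to htrace
    (Finset.card_pos.1 <| hcard ▸ pow_pos (Nat.choose_pos hmk) _) (hcard ▸ hS)
  have hY' i := Finset.mem_powersetCard.1 (Fintype.mem_piFinset.1 hY i)
  refine ⟨_, Finset.filter_subset _ S, hq, fun i ↦ Y i, fun i ↦ (hY' i).1,
    fun i ↦ by simp [(hY' i).2], fun b hb i ↦ ?_⟩
  rw [← coe_trace, (Finset.mem_filter.1 hb).2]

end Sets

section Matroids

variable {α ι κ : Type*} {M : Matroid α} {X P : Set α}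

theorem natCast_rk'_le_eRk (M : Matroid α) (X : Set α) : (M.rk' X : ℕ∞) ≤ M.eRk X := by
  cases hr : M.eRk X with
  | top => exact le_top
  | coe r =>
    refine Nat.cast_le.2 (csSup_le' ?_)
    rintro _ ⟨I, hI, hIX, rfl⟩
    exact Nat.cast_le.1 <| (ncard_le_encard I).trans <| hr ▸ hI.encard_le_eRk_of_subset hIX

theorem eRk_le_eRk_contract_add_encard (M : Matroid α) (X P : Set α) :
    M.eRk P ≤ (M ／ X).eRk P + X.encard := by
  obtain ⟨I, hI⟩ := (M ／ X).exists_isBasis' P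
  have hP : P ∩ M.E ⊆ M.closure (I ∪ X) ∪ X := by
    rintro e ⟨heP, heE⟩
    by_cases heX : e ∈ X
    · exact .inr heX
    · have he : e ∈ (M ／ X).closure I :=
        hI.closure_eq_closure ▸ mem_closure_of_mem' _ heP ⟨heE, heX⟩
      exact .inl (by rw [contract_closure_eq] at he; exact he.1)
  calc M.eRk P = M.eRk (P ∩ M.E) := (M.eRk_inter_ground P).symm
    _ ≤ M.eRk (M.closure (I ∪ X) ∪ X) := M.eRk_mono hP
    _ = M.eRk (I ∪ X) := by rw [eRk_union_closure_left_eq, union_assoc, union_self]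
    _ ≤ I.encard + X.encard := (M.eRk_le_encard _).trans (encard_union_le I X)
    _ = (M ／ X).eRk P + X.encard := by rw [hI.encard_eq_eRk]

theorem indep_union_range_of_isCocircuit {K : ι → Set α} {x : ι → α}
    (hK : ∀ i, M.IsCocircuit (K i)) (hdj : Pairwise (Disjoint on K)) (hx : ∀ i, x i ∈ K i)
    (hP : M.Indep P) (hPK : ∀ i, Disjoint P (K i)) : M.Indep (P ∪ range x) := by
  have hground : P ∪ range x ⊆ M.E :=
    union_subset hP.subset_ground (range_subset_iff.2 fun i ↦ (hK i).subset_ground (hx i))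
  rw [indep_iff_forall_subset_not_isCircuit hground]
  intro C hCsub hC
  obtain ⟨e, heC, heP⟩ := not_subset.1 fun hCP ↦ hC.not_indep (hP.subset hCP)
  obtain ⟨i, rfl⟩ := (hCsub heC).resolve_left heP
  refine hC.inter_isCocircuit_ne_singleton (hK i) (e := x i) ?_
  refine Subset.antisymm ?_ (singleton_subset_iff.2 ⟨heC, hx i⟩)
  rintro y ⟨hyC, hyK⟩
  obtain hyP | ⟨j, rfl⟩ := hCsub hyC
  · exact absurd hyK ((hPK i).notMem_of_mem_left hyP)
  · obtain rfl : j = i := hdj.eq (not_disjoint_iff.2 ⟨x j, hx j, hyK⟩)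
    rfl

theorem eRk_add_card_le_eRk_union_of_isCocircuit {K : ι → Set α}
    (hK : ∀ i, M.IsCocircuit (K i)) (hdj : Pairwise (Disjoint on K))
    (hPK : ∀ i, Disjoint P (K i)) (hXK : ∀ i, (X ∩ K i).Nonempty) :
    M.eRk P + ENat.card ι ≤ M.eRk (P ∪ X) := by
  obtain ⟨I, hI⟩ := M.exists_isBasis' P
  choose x hxX hxK using hXK
  have hx_inj : Injective x := fun i j hij ↦
    hdj.eq (not_disjoint_iff.2 ⟨x i, hxK i, hij ▸ hxK j⟩)
  have hIK i : Disjoint I (K i) := (hPK i).mono_left hI.subset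
  have hIx : Disjoint I (range x) := disjoint_right.2 <| forall_mem_range.2 fun i ↦
    (hIK i).notMem_of_mem_right (hxK i)
  calc M.eRk P + ENat.card ι ≤ I.encard + (range x).encard := by
        rw [hI.encard_eq_eRk]
        gcongr
        exact hx_inj.encard_range
    _ = (I ∪ range x).encard := (encard_union_eq hIx).symm
    _ ≤ M.eRk (P ∪ X) :=
      (indep_union_range_of_isCocircuit hK hdj hxK hI.indep hIK).encard_le_eRk_of_subset
        (union_subset_union hI.subset (range_subset_iff.2 hxX))

theorem exists_eq_biUnion_pair_of_isCircuit {a b : κ → α} {C : Set α}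
    (hab : ∀ i, ∀ y ∈ ({a i, b i} : Set α), y ∉ M.closure (⋃ j ∈ ({i}ᶜ : Set κ), {a j, b j}))
    (hC : M.IsCircuit C) (hCab : C ⊆ ⋃ i, {a i, b i}) :
    ∃ A : Set κ, C = ⋃ i ∈ A, {a i, b i} := by
  have subset_of_mem {i x} (hxC : x ∈ C) (hx : x ∈ ({a i, b i} : Set α)) : {a i, b i} ⊆ C := by
    intro y hy
    by_contra hyC
    refine hab i x hx (M.closure_subset_closure ?_ (hC.mem_closure_sdiff_singleton_of_mem hxC))
    rintro w ⟨hwC, hwx⟩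
    obtain ⟨j, hj⟩ := mem_iUnion.1 (hCab hwC)
    refine mem_biUnion (x := j) ?_ hj
    rintro rfl
    have hwy : w ≠ y := fun h ↦ hyC (h ▸ hwC)
    simp only [mem_insert_iff, mem_singleton_iff] at hx hy hj hwx
    grind
  refine ⟨{i | {a i, b i} ⊆ C}, Subset.antisymm (fun x hx ↦ ?_) (iUnion₂_subset fun i hi ↦ hi)⟩
  obtain ⟨i, hi⟩ := mem_iUnion.1 (hCab hx)
  exact mem_biUnion (x := i) (subset_of_mem hx hi) hi

/-- A family of parallel pairs `{z i, z' i}` of `N` whose first elements form an independent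
transversal. Applied to `N = M ／ X`, it says that the pairs are circuits modulo `X`. -/
structure IsParallelPairFamily (N : Matroid α) (z z' : κ → α) : Prop where
  injective : Injective z
  indep : N.Indep (range z)
  isCircuit (i : κ) : N.IsCircuit {z i, z' i}

namespace IsParallelPairFamily

variable {N : Matroid α} {z z' : κ → α}

theorem ne (h : IsParallelPairFamily N z z') (i : κ) : z i ≠ z' i := fun hi ↦
  (h.isCircuit i).not_indep <| h.indep.subset <| by simp [← hi]

theorem closure_pair (h : IsParallelPairFamily N z z') (i : κ) :
    N.closure {z i, z' i} = N.closure {z i} := by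
  rw [← (h.isCircuit i).closure_sdiff_singleton_eq (z' i), pair_sdiff_right (h.ne i)]

theorem closure_singleton_of_mem_pair (h : IsParallelPairFamily N z z') {i : κ} {y : α}
    (hy : y ∈ ({z i, z' i} : Set α)) : N.closure {y} = N.closure {z i} := by
  obtain rfl | rfl := hy
  · rfl
  · exact ((h.indep.isNonloop_of_mem (mem_range_self i)).closure_eq_closure_iff_isCircuit_of_ne
      (h.ne i)).2 (h.isCircuit i) |>.symm

theorem closure_biUnion_pair (h : IsParallelPairFamily N z z') (A : Set κ) :
    N.closure (⋃ i ∈ A, {z i, z' i}) = N.closure (z '' A) := by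
  rw [N.closure_biUnion_congr _ (fun i ↦ {z i}) A fun i _ ↦ h.closure_pair i,
    ← image_eq_iUnion]

theorem notMem_closure_biUnion_compl (h : IsParallelPairFamily N z z') (i : κ) (y : α)
    (hy : y ∈ ({z i, z' i} : Set α)) : y ∉ N.closure (⋃ j ∈ ({i}ᶜ : Set κ), {z j, z' j}) := by
  rw [h.closure_biUnion_pair, image_compl_eq_range_sdiff_image h.injective, image_singleton]
  intro hcl
  have hzi : z i ∈ N.closure {y} := by
    rw [h.closure_singleton_of_mem_pair hy]
    exact N.mem_closure_self _ (h.indep.subset_ground (mem_range_self i))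
  exact h.indep.notMem_closure_sdiff_of_mem (mem_range_self i) <|
    closure_subset_closure_of_subset_closure (singleton_subset_iff.2 hcl) hzi

theorem pairwise_disjoint (h : IsParallelPairFamily N z z') :
    Pairwise (Disjoint on fun i ↦ ({z i, z' i} : Set α)) := by
  refine fun i j hij ↦ disjoint_left.2 fun y hyi hyj ↦ h.notMem_closure_biUnion_compl i y hyi ?_
  exact N.mem_closure_of_mem' (mem_biUnion (x := j) hij.symm hyj)
    ((h.isCircuit j).subset_ground hyj)

theorem encard_biUnion_pair (h : IsParallelPairFamily N z z') (A : Finset κ) :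
    (⋃ i ∈ A, ({z i, z' i} : Set α)).encard = A.card * 2 := by
  have hdj : Pairwise (Disjoint on fun i : A ↦ ({z i, z' i} : Set α)) := fun i j hij ↦
    h.pairwise_disjoint (Subtype.coe_ne_coe.2 hij)
  have hunion : ⋃ i ∈ A, ({z i, z' i} : Set α) = ⋃ i : A, {z i, z' i} :=
    biUnion_eq_iUnion (A : Set κ) fun i _ ↦ {z i, z' i}
  rw [hunion, encard_iUnion_of_forall_encard_eq hdj fun i ↦ encard_pair (h.ne i),
    Fintype.card_coe]

theorem exists_eq_biUnion_of_isCircuit (h : IsParallelPairFamily (M ／ X) z z') {C : Set α}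
    (hC : M.IsCircuit C) (hCz : C ⊆ ⋃ i, {z i, z' i}) :
    ∃ A : Set κ, C = ⋃ i ∈ A, {z i, z' i} := by
  refine exists_eq_biUnion_pair_of_isCircuit (fun i y hy hcl ↦ ?_) hC hCz
  refine h.notMem_closure_biUnion_compl i y hy ?_
  rw [contract_closure_eq]
  exact ⟨M.closure_subset_closure subset_union_left hcl, ((h.isCircuit i).subset_ground hy).2⟩

theorem eRk_biUnion_union_le (h : IsParallelPairFamily (M ／ X) z z') (A : Finset κ) :
    M.eRk ((⋃ i ∈ A, {z i, z' i}) ∪ X) ≤ A.card + X.encard := by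
  have hsub : ⋃ i ∈ A, {z i, z' i} ⊆ M.closure (z '' A ∪ X) := by
    have hcl := (M ／ X).subset_closure (⋃ i ∈ (A : Set κ), {z i, z' i})
      (iUnion₂_subset fun i _ ↦ (h.isCircuit i).subset_ground)
    rw [h.closure_biUnion_pair, contract_closure_eq] at hcl
    exact hcl.trans sdiff_subset
  calc M.eRk ((⋃ i ∈ A, {z i, z' i}) ∪ X)
      ≤ M.eRk (M.closure (z '' A ∪ X) ∪ X) := M.eRk_mono (union_subset_union_left X hsub)
    _ = M.eRk (z '' A ∪ X) := by rw [eRk_union_closure_left_eq, union_assoc, union_self]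
    _ ≤ (z '' A).encard + X.encard := (M.eRk_le_encard _).trans (encard_union_le _ _)
    _ = A.card + X.encard := by rw [h.injective.encard_image, encard_coe_eq_coe_finsetCard]

theorem dep_biUnion_of_isCocircuit (h : IsParallelPairFamily (M ／ X) z z') {K : ι → Set α}
    (hK : ∀ i, M.IsCocircuit (K i)) (hdj : Pairwise (Disjoint on K))
    (hXK : ∀ i, (X ∩ K i).Nonempty) (hzK : ∀ j i, Disjoint {z j, z' j} (K i)) {A : Finset κ}
    (hA : X.encard < A.card + ENat.card ι) : M.Dep (⋃ i ∈ A, {z i, z' i}) := by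
  refine ⟨fun hindep ↦ hA.not_ge ?_, iUnion₂_subset fun i _ ↦
    (h.isCircuit i).subset_ground.trans (M.contract_ground X ▸ sdiff_subset)⟩
  have hPK i : Disjoint (⋃ j ∈ A, {z j, z' j}) (K i) :=
    disjoint_iUnion₂_left.2 fun j _ ↦ hzK j i
  have hle : A.card + (A.card + ENat.card ι) ≤ A.card + X.encard :=
    calc (A.card + (A.card + ENat.card ι) : ℕ∞) = A.card * 2 + ENat.card ι := by ring
      _ = M.eRk (⋃ j ∈ A, {z j, z' j}) + ENat.card ι := by
        rw [hindep.eRk_eq_encard, h.encard_biUnion_pair]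
      _ ≤ M.eRk ((⋃ j ∈ A, {z j, z' j}) ∪ X) :=
        eRk_add_card_le_eRk_union_of_isCocircuit hK hdj hPK hXK
      _ ≤ A.card + X.encard := h.eRk_biUnion_union_le A
  exact (ENat.add_le_add_iff_left (ENat.natCast_ne_top _)).1 hle

end IsParallelPairFamily

theorem isCircuit_contract_iUnion_inter [Fintype ι] {K : ι → Set α} {C D : Set α} {m : ℕ}
    (hC : M.IsCircuit C) (hCfin : C.Finite) (hD : D.Nonempty) (hDC : D ⊆ C)
    (hdj : Pairwise (Disjoint on K)) (hDK : ∀ i, Disjoint D (K i))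
    (hCK : ∀ i, (C ∩ K i).encard = m) (hcard : C.encard = Fintype.card ι * m + D.encard) :
    (M ／ ⋃ i, C ∩ K i).IsCircuit D :=
  sdiff_eq_iUnion_inter_of_encard_eq hCfin hdj hDC hDK hCK hcard ▸
    hC.contract_sdiff_isCircuit hD hDC

theorem exists_isParallelPairFamily_of_le_eRk {N : Matroid α} {J : Set α} {w : α → α} {p : ℕ}
    (hJ : p ≤ N.eRk J) (hw : ∀ z ∈ J, N.IsCircuit {z, w z}) :
    ∃ z : Fin p → α, (∀ i, z i ∈ J) ∧ IsParallelPairFamily N z (w ∘ z) := by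
  obtain ⟨L, hLJ, hL, hLcard⟩ := le_eRk_iff.1 hJ
  obtain ⟨n, z, hz, rfl⟩ := (finite_of_encard_eq_coe hLcard).fin_param
  obtain rfl : n = p := by
    rw [← image_univ, hz.encard_image, encard_univ, ENat.card_eq_coe_fintype_card] at hLcard
    simpa using hLcard
  have hzJ i : z i ∈ J := hLJ (mem_range_self i)
  exact ⟨z, hzJ, hz, hL, fun i ↦ hw _ (hzJ i)⟩

theorem exists_isParallelPairFamily_contract [Fintype ι] {K : ι → Set α} {Z : Set α} {k m p : ℕ}
    (hm : m ≠ 0) (hmk : m ≤ k) (hdj : Pairwise (Disjoint on K)) (hK : ∀ i, (K i).encard = k)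
    (hZK : Disjoint Z (⋃ i, K i))
    (hrk : (k.choose m ^ Fintype.card ι * (p + m * Fintype.card ι) : ℕ) ≤ M.eRk Z)
    (hpair : ∀ z ∈ Z, ∃ z' ∈ Z \ {z}, ∃ C, M.IsCircuit C ∧
      C.encard = (m * Fintype.card ι + 2 : ℕ) ∧ {z, z'} ⊆ C ∧ ∀ i, (C ∩ K i).encard = m) :
    ∃ (X : Set α) (z z' : Fin p → α), IsParallelPairFamily (M ／ X) z z' ∧
      (∀ j, {z j, z' j} ⊆ Z) ∧ X.encard = (m * Fintype.card ι : ℕ) ∧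
      ∀ i, (X ∩ K i).Nonempty := by
  choose! w hw C hC hCcard hwC hCK using hpair
  obtain ⟨S, hSZ, hS, hScard⟩ := le_eRk_iff.1 hrk
  lift S to Finset α using finite_of_encard_eq_coe hScard
  rw [encard_coe_eq_coe_finsetCard, Nat.cast_inj] at hScard
  obtain ⟨J, hJS, hJcard, Y, hYK, hY, hCY⟩ :=
    exists_subset_forall_inter_eq hmk hK (fun z hz ↦ hCK z (hSZ hz)) hScard.ge
  have hJZ : (J : Set α) ⊆ Z := (Finset.coe_subset.2 hJS).trans hSZ
  have hX : (⋃ i, Y i).encard = (m * Fintype.card ι : ℕ) := by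
    rw [encard_iUnion_of_forall_encard_eq (fun i j hij ↦ (hdj hij).mono (hYK i) (hYK j)) hY,
      mul_comm m, Nat.cast_mul]
  have hcircuit : ∀ z ∈ (J : Set α), (M ／ ⋃ i, Y i).IsCircuit {z, w z} := by
    intro z hz
    obtain ⟨hwZ, hwz⟩ := hw z (hJZ hz)
    have hcard : (C z).encard = Fintype.card ι * m + ({z, w z} : Set α).encard := by
      rw [hCcard z (hJZ hz), encard_pair (Ne.symm hwz), mul_comm m]
      norm_cast
    rw [← iUnion_congr (hCY z hz)]
    exact isCircuit_contract_iUnion_inter (hC z (hJZ hz))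
      (finite_of_encard_eq_coe (hCcard z (hJZ hz))) (insert_nonempty _ _) (hwC z (hJZ hz)) hdj
      (fun i ↦ hZK.mono (pair_subset (hJZ hz) hwZ) (subset_iUnion K i)) (hCK z (hJZ hz)) hcard
  have hJrk : p ≤ (M ／ ⋃ i, Y i).eRk J := by
    have hle := eRk_le_eRk_contract_add_encard M (⋃ i, Y i) J
    have hJindep : M.Indep J := hS.subset (Finset.coe_subset.2 hJS)
    rw [hJindep.eRk_eq_encard, encard_coe_eq_coe_finsetCard, hX] at hle
    exact (ENat.add_le_add_iff_right (ENat.natCast_ne_top _)).1 (le_trans (mod_cast hJcard) hle)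
  obtain ⟨z, hzJ, hz⟩ := exists_isParallelPairFamily_of_le_eRk hJrk hcircuit
  refine ⟨⋃ i, Y i, z, w ∘ z, hz, fun j ↦ ?_, hX, fun i ↦ ?_⟩
  · exact pair_subset (hJZ (hzJ j)) (hw _ (hJZ (hzJ j))).1
  · have hYi : (Y i).Nonempty := encard_ne_zero.1 (by simp [hY i, hm])
    exact hYi.mono (subset_inter (subset_iUnion Y i) (hYK i))

end Matroids

theorem statement10_general {α ι : Type*} [Fintype ι] {M : Matroid α} {K : ι → Set α}
    {Z : Set α} {k m p : ℕ} (hm : m ≠ 0) (hmk : m ≤ k) (hdj : Pairwise (Disjoint on K))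
    (hK : ∀ i, M.IsCocircuit (K i) ∧ (K i).ncard = k) (hZ : Disjoint Z (⋃ i, K i))
    (hrk : (k.choose m ^ Fintype.card ι * (p + m * Fintype.card ι) : ℕ) ≤ M.eRk Z)
    (hpair : ∀ z ∈ Z, ∃ z' ∈ Z \ {z}, ∃ C, M.IsCircuit C ∧ C.ncard = m * Fintype.card ι + 2 ∧
      {z, z'} ⊆ C ∧ ∀ i, (C ∩ K i).ncard = m) :
    ∃ Z' ⊆ Z, ∃ π : Fin p → Set α,
      (⋃ i, π i) = Z' ∧ Pairwise (Disjoint on π) ∧ (∀ i, (π i).ncard = 2) ∧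
      (∀ C, (M ↾ Z').IsCircuit C → ∃ I : Finset (Fin p), C = ⋃ i ∈ I, π i) ∧
      (∀ I : Finset (Fin p), m * Fintype.card ι < I.card + Fintype.card ι →
        ∃ C, M.IsCircuit C ∧ C ⊆ ⋃ i ∈ I, π i) := by
  obtain ⟨X, z, z', hz, hzZ, hX, hXK⟩ := exists_isParallelPairFamily_contract hm hmk hdj
    (fun i ↦ encard_eq_of_ncard_eq (by omega) (hK i).2) hZ hrk fun y hy ↦
      let ⟨y', hy', C, hC, hCcard, hyC, hCK⟩ := hpair y hy
      ⟨y', hy', C, hC, encard_eq_of_ncard_eq (by omega) hCcard, hyC,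
        fun i ↦ encard_eq_of_ncard_eq hm (hCK i)⟩
  have hzK j i : Disjoint {z j, z' j} (K i) := hZ.mono (hzZ j) (subset_iUnion K i)
  have hground : ⋃ j, {z j, z' j} ⊆ M.E := iUnion_subset fun j ↦
    (hz.isCircuit j).subset_ground.trans sdiff_subset
  refine ⟨_, iUnion_subset hzZ, fun j ↦ {z j, z' j}, rfl, hz.pairwise_disjoint,
    fun j ↦ ncard_pair (hz.ne j), fun C hC ↦ ?_, fun I hI ↦ ?_⟩
  · obtain ⟨hCM, hCz⟩ := (restrict_isCircuit_iff hground).1 hC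
    obtain ⟨A, hA⟩ := hz.exists_eq_biUnion_of_isCircuit hCM hCz
    exact ⟨A.toFinite.toFinset, by simpa using hA⟩
  · have hlt : X.encard < I.card + ENat.card ι := by
      rw [hX, ENat.card_eq_coe_fintype_card]
      exact_mod_cast hI
    obtain ⟨C, hCsub, hC⟩ :=
      (hz.dep_biUnion_of_isCocircuit (fun i ↦ (hK i).1) hdj hXK hzK hlt).exists_isCircuit_subset
    exact ⟨C, hC, hCsub⟩

/-- Let `M` have the `(s,2s,t,2t)`-property, with `s − 1` pairwise disjoint
`2t`-element cocircuits `Cs i` and a set `Z ⊆ E(M) − ⋃ᵢ Cs i` satisfying (a) and (b).  Then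
there are `Z' ⊆ Z` and a partition `π = (π 1, …, π p)` of `Z'` into pairs such that each
circuit of `M|Z'` is a union of pairs in `π`, and the union of any `s` pairs in `π` contains a
circuit of `M`. -/
theorem statement10 {α : Type u} (s t p : ℕ) (hs : 0 < s) (ht : 0 < t) (hp : 0 < p)
    (M : Matroid α) (hE : M.E.Finite) (hM : M.HasProp s (2 * s) t (2 * t))
    (Cs : Fin (s - 1) → Set α) (hdj : Pairwise (Function.onFun Disjoint Cs))
    (hcc : ∀ i, M.IsCocircuit' (Cs i) ∧ (Cs i).ncard = 2 * t)
    (Z : Set α) (hZ : Z ⊆ M.E \ ⋃ i, Cs i)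
    (ha : (Nat.choose (2 * t) 2) ^ (s - 1) * (p + 2 * (s - 1)) ≤ M.rk' Z)
    (hb : ∀ z ∈ Z, ∃ z' ∈ Z \ {z}, ∃ C, M.IsCircuit' C ∧ C.ncard = 2 * s ∧
      {z, z'} ⊆ C ∧ ∀ i, (C ∩ Cs i).ncard = 2) :
    ∃ Z' ⊆ Z, ∃ π : Fin p → Set α,
      (⋃ i, π i) = Z' ∧ Pairwise (Function.onFun Disjoint π) ∧ (∀ i, (π i).ncard = 2) ∧
      (∀ C, (M ↾ Z').IsCircuit' C → ∃ I : Finset (Fin p), C = ⋃ i ∈ I, π i) ∧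
      (∀ I : Finset (Fin p), I.card = s → ∃ C, M.IsCircuit' C ∧ C ⊆ ⋃ i ∈ I, π i) := by
  obtain ⟨n, rfl⟩ := Nat.exists_eq_succ_of_ne_zero hs.ne'
  obtain ⟨Z', hZ', π, hπ, hdisj, hcard, hrestrict, hdep⟩ :=
    statement10_general two_ne_zero (by omega : 2 ≤ 2 * t) hdj hcc (subset_sdiff.1 hZ).2
      (by simpa using (Nat.cast_le.2 ha).trans (natCast_rk'_le_eRk M Z))
      (by simp only [Fintype.card_fin]; exact hb)
  refine ⟨Z', hZ', π, hπ, hdisj, hcard, hrestrict, fun I hI ↦ hdep I ?_⟩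
  rw [hI, Fintype.card_fin]
  omega
end
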